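/- Let k ∈ ℕ, λ > 0 and F : ℝ → ℝ. (a) If F is (k+1)-times differentiable with ‖F^{(k+1)}‖ < ∞, then |F(x) − P_λ^k(x;z,F)| ≤ (2^k/(k+1))·‖F^{(k+1)}‖·(λ^{k+1} + |x−z|^{k+1}) for all z, x ∈ ℝ. (b) If F is twice differentiable with ‖F'‖ < ∞ and ‖x·F''(x)‖ < ∞, then sup_{z∈ℝ} |z·Δ_y²F(z)| ≤ (4‖F'‖ + ‖x·F''(x)‖)·y² for all y ∈ ℝ. -/

import Mathlib

open Finset

/-- `k`-th iterated difference `Δ_y^k G`. -/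
noncomputable def Δiter (y : ℝ) (k : ℕ) (G : ℝ → ℝ) : ℝ → ℝ :=
  (fun (G : ℝ → ℝ) (z : ℝ) => G (z + y) - G z)^[k] G

/-- The interpolating polynomial `P_y^k(x; z, F)` of `F` at the points `z, z+y, …, z+ky`. -/
noncomputable def interp (y : ℝ) (k : ℕ) (z : ℝ) (F : ℝ → ℝ) (x : ℝ) : ℝ :=
  F z + ∑ s ∈ Finset.Icc 1 k,
    Δiter y s F z * ∏ i ∈ Finset.Icc 1 s, (x - z - ((i : ℝ) - 1) * y) / ((i : ℝ) * y)

/-!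
For (a), subtract from `F` its interpolating polynomial and the multiple of `∏ (X - nodeᵢ)` that
makes the difference vanish at `x` too. By iterated Rolle the `(k+1)`-st derivative of the result
has a zero `ξ`, which identifies that multiple as `F^(k+1)(ξ) / (k+1)!`; it remains to estimate
`∏ |x - z - i y| ≤ k! (|x - z| + |y|)^(k+1)`.

For (b), the same formula at `x = z + (k+1) y` is the mean value theorem
`Δ_y^(k+1) F(z) = y^(k+1) F^(k+1)(ξ)`. Apply it to both differences on the right of the discrete
Leibniz rule `z Δ_y²F(z) = Δ_y²(tF)(z) - 2y Δ_y F(z + y)`, using `(tF)'' = tF'' + 2F'`.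
-/

open Polynomial Lagrange
open scoped Nat fwdDiff

section DerivSeq

variable {𝕜 : Type*} [NontriviallyNormedField 𝕜] {f g : ℕ → 𝕜 → 𝕜} {m n : ℕ} {s : Set 𝕜}

/-- `f 0, …, f n` are a function on `s` and its successive derivatives within `s`. Naming the
derivatives, instead of using `iteratedDerivWithin`, lets sums and products be differentiated
termwise although `f n` need not be continuous. -/
def IsDerivSeqOn (f : ℕ → 𝕜 → 𝕜) (n : ℕ) (s : Set 𝕜) : Prop :=
  ∀ j < n, ∀ t ∈ s, HasDerivWithinAt (f j) (f (j + 1) t) s t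

lemma isDerivSeqOn_iteratedDerivWithin {F : 𝕜 → 𝕜}
    (hF : ∀ j < n, DifferentiableOn 𝕜 (iteratedDerivWithin j F s) s) :
    IsDerivSeqOn (fun j ↦ iteratedDerivWithin j F s) n s := fun j hj t ht ↦ by
  simpa only [iteratedDerivWithin_succ] using (hF j hj t ht).hasDerivWithinAt

lemma isDerivSeqOn_eval_iterate_derivative (P : 𝕜[X]) :
    IsDerivSeqOn (fun j t ↦ (derivative^[j] P).eval t) n s := fun j _ t _ ↦ by
  simpa only [Function.iterate_succ_apply'] using (derivative^[j] P).hasDerivWithinAt t s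

namespace IsDerivSeqOn

lemma mono_right (hf : IsDerivSeqOn f n s) (hmn : m ≤ n) : IsDerivSeqOn f m s :=
  fun j hj ↦ hf j (hj.trans_le hmn)

lemma tail (hf : IsDerivSeqOn f (n + 1) s) : IsDerivSeqOn (fun j ↦ f (j + 1)) n s :=
  fun j hj ↦ hf (j + 1) (Nat.succ_lt_succ hj)

lemma sub (hf : IsDerivSeqOn f n s) (hg : IsDerivSeqOn g n s) :
    IsDerivSeqOn (fun j t ↦ f j t - g j t) n s :=
  fun j hj t ht ↦ (hf j hj t ht).fun_sub (hg j hj t ht)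

lemma id_mul (hf : IsDerivSeqOn f n s) :
    IsDerivSeqOn (fun j t ↦ t * f j t + j * f (j - 1) t) n s := by
  intro j hj t ht
  have hmul := (hasDerivWithinAt_id t s).fun_mul (hf j hj t ht)
  cases j with
  | zero => simpa [add_comm] using hmul
  | succ i =>
    refine (hmul.fun_add ((hf i (by lia) t ht).const_mul ((i + 1 : ℕ) : 𝕜))).congr_deriv ?_
    simp only [id, Nat.add_sub_cancel, Nat.cast_add_one]
    ring

end IsDerivSeqOn

end DerivSeq

section LagrangeError

variable {f : ℕ → ℝ → ℝ} {n : ℕ} {I : Set ℝ}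

lemma IsDerivSeqOn.exists_eq_zero_of_strictMono (hI : I.OrdConnected) (hf : IsDerivSeqOn f n I)
    {p : Fin (n + 1) → ℝ} (hp : StrictMono p) (hpI : ∀ i, p i ∈ I) (hp0 : ∀ i, f 0 (p i) = 0) :
    ∃ ξ ∈ I, f n ξ = 0 := by
  induction n generalizing f with
  | zero => exact ⟨p 0, hpI 0, hp0 0⟩
  | succ n ih =>
    have rolle (i : Fin (n + 1)) : ∃ c ∈ Set.Ioo (p i.castSucc) (p i.succ), f 1 c = 0 := by
      have hsub : Set.Icc (p i.castSucc) (p i.succ) ⊆ I := hI.out (hpI _) (hpI _)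
      have hderiv (t : ℝ) (ht : t ∈ I) : HasDerivWithinAt (f 0) (f 1 t) I t := hf 0 n.succ_pos t ht
      refine exists_hasDerivAt_eq_zero (hp Fin.castSucc_lt_succ)
        (fun t ht ↦ (hderiv t (hsub ht)).continuousWithinAt.mono hsub) (by rw [hp0, hp0])
        fun t ht ↦ (hderiv t (hsub (Set.Ioo_subset_Icc_self ht))).hasDerivAt ?_
      exact Filter.mem_of_superset (Icc_mem_nhds ht.1 ht.2) hsub
    choose q hq hq0 using rolle
    have hqI (i : Fin (n + 1)) : q i ∈ I :=
      hI.out (hpI _) (hpI _) (Set.Ioo_subset_Icc_self (hq i))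
    have hq_mono : StrictMono q := fun i j hij ↦
      calc q i < p i.succ := (hq i).2
        _ ≤ p j.castSucc := hp.monotone (Fin.succ_le_castSucc_iff.2 hij)
        _ < q j := (hq j).1
    exact ih hf.tail hq_mono hqI hq0

lemma IsDerivSeqOn.exists_eq_zero_of_card_lt (hI : I.OrdConnected) (hf : IsDerivSeqOn f n I)
    {Z : Finset ℝ} (hZ : n < #Z) (hZI : ∀ t ∈ Z, t ∈ I) (hZ0 : ∀ t ∈ Z, f 0 t = 0) :
    ∃ ξ ∈ I, f n ξ = 0 :=
  have hp (i : Fin (n + 1)) := Z.orderEmbOfCardLe_mem hZ i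
  hf.exists_eq_zero_of_strictMono hI (Z.orderEmbOfCardLe hZ).strictMono
    (fun i ↦ hZI _ (hp i)) fun i ↦ hZ0 _ (hp i)

lemma iterate_derivative_natDegree_of_monic {R : Type*} [Semiring R] {P : R[X]} (hP : P.Monic) :
    derivative^[P.natDegree] P = C (P.natDegree ! : R) := by
  have hdeg := natDegree_iterate_derivative P P.natDegree
  rw [Nat.sub_self] at hdeg
  rw [eq_C_of_natDegree_le_zero hdeg, coeff_iterate_derivative, zero_add, hP.coeff_natDegree,
    Nat.descFactorial_self, nsmul_one]

lemma IsDerivSeqOn.exists_sub_eval_eq_mul_nodal {ι : Type*} {s : Finset ι} {v : ι → ℝ}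
    (hI : I.OrdConnected) (hf : IsDerivSeqOn f #s I) (hv : Set.InjOn v s) (hvI : ∀ i ∈ s, v i ∈ I)
    {P : ℝ[X]} (hP : P.degree < #s) (hPf : ∀ i ∈ s, P.eval (v i) = f 0 (v i))
    {x : ℝ} (hx : x ∈ I) :
    ∃ ξ ∈ I, f 0 x - P.eval x = f #s ξ / (#s)! * (nodal s v).eval x := by
  by_cases hnode : ∃ i ∈ s, x = v i
  · obtain ⟨i, hi, rfl⟩ := hnode
    exact ⟨v i, hx, by rw [hPf i hi, eval_nodal_at_node hi, sub_self, mul_zero]⟩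
  push Not at hnode
  set c : ℝ := (f 0 x - P.eval x) / (nodal s v).eval x
  have hcx : c * (nodal s v).eval x = f 0 x - P.eval x :=
    div_mul_cancel₀ _ (eval_nodal_not_at_node hnode)
  have hzero : ∀ t ∈ insert x (s.image v), f 0 t - (P + C c * nodal s v).eval t = 0 := by
    simp only [mem_insert, mem_image, eval_add, eval_mul, eval_C]
    rintro t (rfl | ⟨i, hi, rfl⟩)
    · rw [hcx]
      ring
    · rw [hPf i hi, eval_nodal_at_node hi]
      ring
  have hcard : #s < #(insert x (s.image v)) := by
    rw [card_insert_of_notMem fun h ↦ ?_, card_image_of_injOn hv]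
    · exact Nat.lt_succ_self _
    · obtain ⟨i, hi, hix⟩ := mem_image.1 h
      exact hnode i hi hix.symm
  obtain ⟨ξ, hξI, hξ⟩ := (hf.sub (isDerivSeqOn_eval_iterate_derivative
    (P + C c * nodal s v))).exists_eq_zero_of_card_lt hI hcard (by simpa using ⟨hx, hvI⟩) hzero
  have hderiv : derivative^[#s] (P + C c * nodal s v) = C (c * (#s)!) := by
    have hnodal := iterate_derivative_natDegree_of_monic (nodal_monic (s := s) (v := v))
    rw [natDegree_nodal] at hnodal
    rw [iterate_map_add derivative, iterate_derivative_eq_zero_of_degree_lt hP,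
      iterate_derivative_C_mul, hnodal, zero_add, C_mul]
  rw [hderiv, eval_C, sub_eq_zero] at hξ
  exact ⟨ξ, hξI, by rw [hξ, mul_div_cancel_right₀ _ (by positivity), hcx]⟩

end LagrangeError

section NewtonPolynomial

variable {K : Type*} [Field K]

/-- The Newton basis polynomial `∏_{i < s} (X - z - i y) / (s! y^s)`, that is, the binomial
coefficient `((X - z) / y).choose s`. -/
noncomputable def newtonBasis (y z : K) (s : ℕ) : K[X] :=
  (s ! * y ^ s : K)⁻¹ • nodal (range s) fun i : ℕ ↦ z + i * y

/-- The Gregory–Newton form of the polynomial of degree at most `k` interpolating `F` at the nodes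
`z, z + y, …, z + k y`. -/
noncomputable def newtonPolynomial (y : K) (k : ℕ) (z : K) (F : K → K) : K[X] :=
  ∑ s ∈ range (k + 1), Δ_[y] ^[s] F z • newtonBasis y z s

variable {y : K} (z : K) (F : K → K)

lemma eval_newtonBasis (y x : K) (s : ℕ) :
    (newtonBasis y z s).eval x = ∏ i ∈ range s, (x - z - i * y) / ((i + 1) * y) := by
  have hden : ∏ i ∈ range s, ((i : K) + 1) * y = s ! * y ^ s := by
    rw [prod_mul_distrib, prod_const, card_range, ← prod_range_add_one_eq_factorial]
    push_cast
    rfl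
  rw [newtonBasis, eval_smul, smul_eq_mul, eval_nodal, prod_div_distrib, hden, div_eq_inv_mul]
  simp only [sub_sub]

lemma degree_newtonPolynomial_lt (y : K) (k : ℕ) :
    (newtonPolynomial y k z F).degree < (k + 1 : ℕ) := by
  refine (degree_sum_le _ _).trans_lt ((Finset.sup_lt_iff (WithBot.bot_lt_coe _)).2 fun s hs ↦ ?_)
  have hbasis : (newtonBasis y z s).degree ≤ s :=
    (degree_smul_le _ _).trans (by rw [degree_nodal, card_range])
  exact ((degree_smul_le _ _).trans hbasis).trans_lt (by exact_mod_cast mem_range.1 hs)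

variable [CharZero K]

lemma eval_nodal_eq_mul_newtonBasis (hy : y ≠ 0) (x : K) (s : ℕ) :
    (nodal (range s) fun i : ℕ ↦ z + i * y).eval x = s ! * y ^ s * (newtonBasis y z s).eval x := by
  have : (s ! : K) ≠ 0 := mod_cast s.factorial_ne_zero
  rw [newtonBasis, eval_smul, smul_eq_mul, mul_inv_cancel_left₀ (by positivity)]

lemma eval_newtonBasis_node (hy : y ≠ 0) (j s : ℕ) :
    (newtonBasis y z s).eval (z + j * y) = j.choose s := by
  rw [Nat.cast_choose_eq_descPochhammer_div, descPochhammer_eval_eq_prod_range, eval_newtonBasis,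
    ← prod_range_add_one_eq_factorial, Nat.cast_prod, ← prod_div_distrib]
  refine prod_congr rfl fun i _ ↦ ?_
  rw [add_sub_cancel_left, ← sub_mul, mul_div_mul_right _ _ hy, Nat.cast_add_one]

lemma eval_newtonPolynomial_node (hy : y ≠ 0) {j k : ℕ} (hj : j ≤ k) :
    (newtonPolynomial y k z F).eval (z + j * y) = F (z + j * y) := by
  have hshift := shift_eq_sum_fwdDiff_iter y F j z
  simp only [nsmul_eq_mul] at hshift
  simp only [newtonPolynomial, eval_finsetSum, eval_smul, smul_eq_mul, eval_newtonBasis_node z hy,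
    hshift]
  refine (sum_subset (range_mono (Nat.succ_le_succ hj)) fun s _ hs ↦ ?_).symm.trans
    (sum_congr rfl fun s _ ↦ mul_comm _ _)
  rw [Nat.choose_eq_zero_of_lt (by simpa using hs), Nat.cast_zero, mul_zero]

lemma sub_eval_newtonPolynomial_next_node (hy : y ≠ 0) (k : ℕ) :
    F (z + (k + 1 : ℕ) * y) - (newtonPolynomial y k z F).eval (z + (k + 1 : ℕ) * y) =
      Δ_[y] ^[k + 1] F z := by
  rw [← eval_newtonPolynomial_node z F hy le_rfl, newtonPolynomial, sum_range_succ, eval_add,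
    ← newtonPolynomial, add_sub_cancel_left, eval_smul, smul_eq_mul, eval_newtonBasis_node z hy,
    Nat.choose_self, Nat.cast_one, mul_one]

end NewtonPolynomial

lemma Δiter_eq_fwdDiff_iter (y : ℝ) (k : ℕ) (G : ℝ → ℝ) : Δiter y k G = Δ_[y] ^[k] G := rfl

lemma interp_eq_eval_newtonPolynomial (y : ℝ) (k : ℕ) (z : ℝ) (F : ℝ → ℝ) (x : ℝ) :
    interp y k z F x = (newtonPolynomial y k z F).eval x := by
  have hbasis (s : ℕ) : ∏ i ∈ Icc 1 s, (x - z - ((i : ℝ) - 1) * y) / ((i : ℝ) * y) =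
      (newtonBasis y z s).eval x := by
    rw [eval_newtonBasis, ← Ico_add_one_right_eq_Icc, prod_Ico_eq_prod_range, Nat.add_sub_cancel]
    refine prod_congr rfl fun i _ ↦ ?_
    push_cast
    ring_nf
  simp only [interp, Δiter_eq_fwdDiff_iter, hbasis, newtonPolynomial, eval_finsetSum,
    eval_smul, smul_eq_mul]
  rw [sum_range_succ', add_comm, ← Ico_add_one_right_eq_Icc, sum_Ico_eq_sum_range,
    Nat.add_sub_cancel]
  simp [eval_newtonBasis, add_comm 1]

section NewtonRemainder

variable {f : ℕ → ℝ → ℝ} {I : Set ℝ} {k n : ℕ} {x y z : ℝ}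

lemma IsDerivSeqOn.exists_sub_eval_newtonPolynomial_eq (hI : I.OrdConnected)
    (hf : IsDerivSeqOn f (k + 1) I) (hy : y ≠ 0) (hz : ∀ i ≤ k, z + i * y ∈ I) (hx : x ∈ I) :
    ∃ ξ ∈ I, f 0 x - (newtonPolynomial y k z (f 0)).eval x =
      f (k + 1) ξ / (k + 1)! * (nodal (range (k + 1)) fun i : ℕ ↦ z + i * y).eval x := by
  have hinj : Function.Injective fun i : ℕ ↦ z + i * y := fun i j hij ↦ by simpa [hy] using hij
  have hle {i : ℕ} (hi : i ∈ range (k + 1)) : i ≤ k := Nat.lt_succ_iff.1 (mem_range.1 hi)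
  rw [← card_range (k + 1)] at hf
  simpa only [card_range] using hf.exists_sub_eval_eq_mul_nodal hI hinj.injOn
    (fun i hi ↦ hz i (hle hi)) (by simpa only [card_range] using degree_newtonPolynomial_lt z _ y k)
    (fun i hi ↦ eval_newtonPolynomial_node z _ hy (hle hi)) hx

lemma prod_range_add_natCast_mul_le {R : Type*} [CommSemiring R] [PartialOrder R]
    [IsOrderedRing R] {a b : R} (ha : 0 ≤ a) (hb : 0 ≤ b) (k : ℕ) :
    ∏ i ∈ range (k + 1), (a + i * b) ≤ k ! * (a + b) ^ (k + 1) := by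
  have hfactor (i : ℕ) : a + (i + 1 : ℕ) * b ≤ (i + 1 : ℕ) * (a + b) := by
    have hone : (1 : R) ≤ (i + 1 : ℕ) := i.cast_succ (R := R) ▸ le_add_of_nonneg_left i.cast_nonneg
    rw [mul_add]
    gcongr
    exact le_mul_of_one_le_left ha hone
  calc ∏ i ∈ range (k + 1), (a + i * b)
      = (∏ i ∈ range k, (a + (i + 1 : ℕ) * b)) * a := by
        rw [prod_range_succ', Nat.cast_zero, zero_mul, add_zero]
    _ ≤ (∏ i ∈ range k, (i + 1 : ℕ) * (a + b)) * (a + b) := by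
        gcongr with i
        · exact hfactor i
        · exact le_add_of_nonneg_right hb
    _ = k ! * (a + b) ^ (k + 1) := by
        rw [prod_mul_distrib, prod_const, card_range, ← Nat.cast_prod,
          prod_range_add_one_eq_factorial, pow_succ, mul_assoc]

lemma abs_eval_nodal_range_le (x y z : ℝ) (k : ℕ) :
    |(nodal (range (k + 1)) fun i : ℕ ↦ z + i * y).eval x| ≤
      k ! * (2 ^ k * (|y| ^ (k + 1) + |x - z| ^ (k + 1))) := by
  rw [eval_nodal, abs_prod]
  calc ∏ i ∈ range (k + 1), |x - (z + i * y)|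
      ≤ ∏ i ∈ range (k + 1), (|x - z| + i * |y|) := by
        gcongr with i
        simpa [sub_sub, abs_mul] using abs_sub (x - z) (i * y)
    _ ≤ k ! * (|x - z| + |y|) ^ (k + 1) :=
        prod_range_add_natCast_mul_le (abs_nonneg _) (abs_nonneg _) k
    _ ≤ k ! * (2 ^ k * (|y| ^ (k + 1) + |x - z| ^ (k + 1))) := by
        rw [add_comm |x - z|]
        gcongr
        exact add_pow_le (abs_nonneg y) (abs_nonneg _) (k + 1)

theorem IsDerivSeqOn.abs_sub_eval_newtonPolynomial_le (hI : I.OrdConnected)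
    (hf : IsDerivSeqOn f (k + 1) I) (hy : y ≠ 0) (hz : ∀ i ≤ k, z + i * y ∈ I) (hx : x ∈ I)
    {M : ℝ} (hM : ∀ t ∈ I, |f (k + 1) t| ≤ M) :
    |f 0 x - (newtonPolynomial y k z (f 0)).eval x| ≤
      2 ^ k / (k + 1) * M * (|y| ^ (k + 1) + |x - z| ^ (k + 1)) := by
  obtain ⟨ξ, hξI, hξ⟩ := hf.exists_sub_eval_newtonPolynomial_eq hI hy hz hx
  have hM0 : 0 ≤ M := (abs_nonneg _).trans (hM ξ hξI)
  rw [hξ, abs_mul, abs_div, Nat.abs_cast]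
  calc |f (k + 1) ξ| / (k + 1)! * |(nodal (range (k + 1)) fun i : ℕ ↦ z + i * y).eval x|
      ≤ M / (k + 1)! * (k ! * (2 ^ k * (|y| ^ (k + 1) + |x - z| ^ (k + 1)))) := by
        gcongr
        · exact hM ξ hξI
        · exact abs_eval_nodal_range_le x y z k
    _ = 2 ^ k / (k + 1) * M * (|y| ^ (k + 1) + |x - z| ^ (k + 1)) := by
        rw [Nat.factorial_succ]
        push_cast
        field_simp

theorem IsDerivSeqOn.exists_fwdDiff_iter_eq (hI : I.OrdConnected) (hf : IsDerivSeqOn f n I)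
    (hz : ∀ i ≤ n, z + i * y ∈ I) : ∃ ξ ∈ I, Δ_[y] ^[n] (f 0) z = y ^ n * f n ξ := by
  have hzI : z ∈ I := by simpa using hz 0 n.zero_le
  cases n with
  | zero => exact ⟨z, hzI, by simp⟩
  | succ k =>
    obtain rfl | hy := eq_or_ne y 0
    · exact ⟨z, hzI, by simp [Function.iterate_succ_apply', fwdDiff]⟩
    obtain ⟨ξ, hξI, hξ⟩ := hf.exists_sub_eval_newtonPolynomial_eq hI hy
      (fun i hi ↦ hz i (hi.trans k.le_succ)) (hz (k + 1) le_rfl)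
    refine ⟨ξ, hξI, ?_⟩
    rw [← sub_eval_newtonPolynomial_next_node z (f 0) hy, hξ, eval_nodal_eq_mul_newtonBasis z hy,
      eval_newtonBasis_node z hy, Nat.choose_self]
    field_simp
    simp

lemma fwdDiff_iter_succ_id_mul {R : Type*} [CommRing R] (y : R) (F : R → R) (n : ℕ) (z : R) :
    Δ_[y] ^[n + 1] (fun t ↦ t * F t) z =
      z * Δ_[y] ^[n + 1] F z + (n + 1) * y * Δ_[y] ^[n] F (z + y) := by
  induction n generalizing z with
  | zero =>
    simp only [zero_add, Function.iterate_one, Function.iterate_zero, id, fwdDiff]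
    push_cast
    ring
  | succ n ih =>
    have hstep (G : R → R) (m : ℕ) (t : R) :
        Δ_[y] ^[m + 1] G t = Δ_[y] ^[m] G (t + y) - Δ_[y] ^[m] G t := by
      rw [Function.iterate_succ_apply', fwdDiff]
    rw [hstep, ih, ih, hstep F (n + 1) z, hstep F n (z + y)]
    push_cast
    ring

theorem IsDerivSeqOn.abs_mul_fwdDiff_iter_succ_le (hI : I.OrdConnected)
    (hf : IsDerivSeqOn f (n + 1) I) (hz : ∀ i ≤ n + 1, z + i * y ∈ I) {M M' : ℝ}
    (hM : ∀ t ∈ I, |f n t| ≤ M) (hM' : ∀ t ∈ I, |t * f (n + 1) t| ≤ M') :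
    |z * Δ_[y] ^[n + 1] (f 0) z| ≤ (2 * (n + 1) * M + M') * |y| ^ (n + 1) := by
  have hshift (i : ℕ) (hi : i ≤ n) : z + y + i * y ∈ I := by
    convert hz (i + 1) (Nat.succ_le_succ hi) using 1
    push_cast
    ring
  obtain ⟨ξ, hξI, hξ⟩ := hf.id_mul.exists_fwdDiff_iter_eq hI hz
  obtain ⟨η, hηI, hη⟩ := (hf.mono_right n.le_succ).exists_fwdDiff_iter_eq hI hshift
  have hexpand : z * Δ_[y] ^[n + 1] (f 0) z =
      (ξ * f (n + 1) ξ + (n + 1) * f n ξ - (n + 1) * f n η) * y ^ (n + 1) := by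
    have hleibniz := fwdDiff_iter_succ_id_mul y (f 0) n z
    simp only [Nat.cast_zero, zero_mul, add_zero, Nat.add_sub_cancel, Nat.cast_add_one] at hξ
    rw [hξ, hη] at hleibniz
    linear_combination -hleibniz
  have hweight (t : ℝ) (ht : t ∈ I) : |(n + 1) * f n t| ≤ (n + 1) * M := by
    rw [abs_mul, abs_of_nonneg (by positivity)]
    gcongr
    exact hM t ht
  rw [hexpand, abs_mul, abs_pow]
  gcongr
  calc |ξ * f (n + 1) ξ + (n + 1) * f n ξ - (n + 1) * f n η|
      ≤ |ξ * f (n + 1) ξ| + |(n + 1) * f n ξ| + |(n + 1) * f n η| :=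
        (abs_sub _ _).trans (by gcongr; exact abs_add_le _ _)
    _ ≤ M' + (n + 1) * M + (n + 1) * M := by
        gcongr
        exacts [hM' ξ hξI, hweight ξ hξI, hweight η hηI]
    _ = 2 * (n + 1) * M + M' := by ring

end NewtonRemainder

theorem interp_error_and_weighted_second_diff_general (k : ℕ) {I : Set ℝ} (hI : I.OrdConnected)
    {F : ℝ → ℝ} (hF : ∀ j ≤ k, DifferentiableOn ℝ (iteratedDerivWithin j F I) I) (y z : ℝ) :
    (∀ M : ℝ, (∀ t ∈ I, |iteratedDerivWithin (k + 1) F I t| ≤ M) →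
      y ≠ 0 → (∀ i ≤ k, z + i * y ∈ I) → ∀ x ∈ I,
        |F x - interp y k z F x| ≤
          2 ^ k / (k + 1) * M * (|y| ^ (k + 1) + |x - z| ^ (k + 1))) ∧
    (∀ M' M'' : ℝ, (∀ t ∈ I, |iteratedDerivWithin k F I t| ≤ M') →
      (∀ t ∈ I, |t * iteratedDerivWithin (k + 1) F I t| ≤ M'') →
      (∀ i ≤ k + 1, z + i * y ∈ I) →
        |z * Δiter y (k + 1) F z| ≤ (2 * (k + 1) * M' + M'') * |y| ^ (k + 1)) := by
  have hseq : IsDerivSeqOn (fun j ↦ iteratedDerivWithin j F I) (k + 1) I :=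
    isDerivSeqOn_iteratedDerivWithin fun j hj ↦ hF j (Nat.lt_succ_iff.1 hj)
  constructor
  · intro M hM hy hz x hx
    simpa only [interp_eq_eval_newtonPolynomial, iteratedDerivWithin_zero] using
      hseq.abs_sub_eval_newtonPolynomial_le hI hy hz hx hM
  · intro M' M'' hM' hM'' hz
    simpa only [Δiter_eq_fwdDiff_iter, iteratedDerivWithin_zero] using
      hseq.abs_mul_fwdDiff_iter_succ_le hI hz hM' hM''

/-- (a) interpolation-error bound for `(k+1)`-times differentiable `F` with
bounded `(k+1)`-st derivative; (b) bound on `z·Δ_y²F(z)` for twice differentiable `F` with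
bounded `F'` and bounded `x·F''(x)`. -/
theorem interp_error_and_weighted_second_diff (k : ℕ) (hk : 1 ≤ k) (lam : ℝ) (hlam : 0 < lam) :
    (∀ F : ℝ → ℝ,
      (∀ j : ℕ, j ≤ k → Differentiable ℝ (iteratedDeriv j F)) →
      ∀ M : ℝ, (∀ x, |iteratedDeriv (k + 1) F x| ≤ M) →
      ∀ z x : ℝ,
        |F x - interp lam k z F x| ≤
          (2 : ℝ) ^ k / ((k : ℝ) + 1) * M * (lam ^ (k + 1) + |x - z| ^ (k + 1))) ∧
    (∀ F : ℝ → ℝ, Differentiable ℝ F → Differentiable ℝ (deriv F) →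
      ∀ M' M'' : ℝ,
        (∀ x, |deriv F x| ≤ M') → (∀ x, |x * deriv (deriv F) x| ≤ M'') →
        ∀ y z : ℝ, |z * Δiter y 2 F z| ≤ (4 * M' + M'') * y ^ 2) := by
  constructor
  · intro F hF M hM z x
    simpa [abs_of_pos hlam] using (interp_error_and_weighted_second_diff_general k
      Set.ordConnected_univ (by simpa [differentiableOn_univ] using hF) lam z).1 M
      (by simpa using hM) hlam.ne' (fun _ _ ↦ trivial) x trivial
  · intro F hF hF' M' M'' hM' hM'' y z
    have hdiff : ∀ j ≤ 1, DifferentiableOn ℝ (iteratedDerivWithin j F Set.univ) Set.univ := by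
      intro j hj
      interval_cases j <;> simpa [differentiableOn_univ]
    have hbound := (interp_error_and_weighted_second_diff_general 1 Set.ordConnected_univ hdiff
      y z).2 M' M'' (by simpa using hM') (by simpa [iteratedDeriv_succ] using hM'')
      fun _ _ ↦ trivial
    convert hbound using 2
    · norm_num
    · exact (sq_abs y).symm
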